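/- arXiv:1504.08282 — 2 statements merged into one kernel-verified Lean document; each statement's English description precedes it below -/
import Mathlib

section
/- Let Λ be an artin algebra and P the category of finitely generated right Λ-modules of finite projective dimension. If P is contravariantly finite in mod Λ, then the class P ∩ P^⊥ equals the class of Ext-injective modules in P, where P^⊥ = {M : Ext^i_Λ(N, M) = 0 for all N in P and all i > 0}. -/
open CategoryTheory

universe u

/-- The `n`-th Ext group of `A`-modules `M`, `N`. -/
noncomputable abbrev ext {A : Type u} [Ring A] (M N : ModuleCat.{u} A) (n : ℕ) : Type u :=
  ((Ext ℤ (ModuleCat.{u} A) n).obj (Opposite.op M)).obj N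

/-- `Ext^i(N, M) = 0` for all `i > 0`. -/
def ExtVanish {A : Type u} [Ring A] (N M : ModuleCat.{u} A) : Prop :=
  ∀ i, 0 < i → Subsingleton (ext N M i)

/-- `M` has projective dimension at most `n`, i.e. `Ext^i(M, -) = 0` for `i > n`. -/
def pdLE {A : Type u} [Ring A] (M : ModuleCat.{u} A) (n : ℕ) : Prop :=
  ∀ i, n < i → ∀ N : ModuleCat.{u} A, Subsingleton (ext M N i)

/-- The projective dimension of `M`, as an element of `ℕ∞` (`⊤` if infinite). -/
noncomputable def projDim {A : Type u} [Ring A] (M : ModuleCat.{u} A) : ℕ∞ :=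
  sInf {d : ℕ∞ | ∃ n : ℕ, d = n ∧ pdLE M n}

/-- Membership in `𝒫`: finitely generated of finite projective dimension. -/
def InP {A : Type u} [Ring A] (M : ModuleCat.{u} A) : Prop :=
  Module.Finite A M ∧ ∃ n, pdLE M n

/-- The finitistic dimension of `A`. -/
noncomputable def findim (A : Type u) [Ring A] : ℕ∞ :=
  sSup {d : ℕ∞ | ∃ M : ModuleCat.{u} A, InP M ∧ d = projDim M}

/-- `M` is a direct summand of `S`. -/
def IsSummand {A : Type u} [Ring A] (M S : ModuleCat.{u} A) : Prop :=
  ∃ (s : M →ₗ[A] S) (r : S →ₗ[A] M), r ∘ₗ s = LinearMap.id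

/-- `M` belongs to `add 𝒳`: `M` is a direct summand of a finite direct sum of objects of `𝒳`. -/
def InAddOf {A : Type u} [Ring A] (X : ModuleCat.{u} A → Prop) (M : ModuleCat.{u} A) : Prop :=
  ∃ (k : ℕ) (F : Fin k → ModuleCat.{u} A), (∀ i, X (F i)) ∧
    IsSummand M (ModuleCat.of A (DirectSum (Fin k) (fun i => ↥(F i))))

/-- `M` belongs to `Add T`: `M` is a direct summand of an arbitrary direct sum of copies of `T`. -/
def InAdd {A : Type u} [Ring A] (T M : ModuleCat.{u} A) : Prop :=
  ∃ ι : Type u, IsSummand M (ModuleCat.of A (DirectSum ι (fun _ => ↥T)))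

/-- `M ∈ 𝒳^⊥`: `Ext^i(N, M) = 0` for all `N ∈ 𝒳` and `i > 0`. -/
def InPerpOf {A : Type u} [Ring A] (X : ModuleCat.{u} A → Prop) (M : ModuleCat.{u} A) : Prop :=
  ∀ N, X N → ExtVanish N M

/-- `M` is Ext-injective in `𝒫`: `M ∈ 𝒫` and `Ext^1(N, M) = 0` for all `N ∈ 𝒫`. -/
def ExtInjInP {A : Type u} [Ring A] (M : ModuleCat.{u} A) : Prop :=
  InP M ∧ ∀ N : ModuleCat.{u} A, InP N → Subsingleton (ext N M 1)

/-- `M` is splitting injective in `𝒳`: every injective map `M → Y` with `Y ∈ add 𝒳` splits. -/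
def SplittingInjIn {A : Type u} [Ring A] (X : ModuleCat.{u} A → Prop)
    (M : ModuleCat.{u} A) : Prop :=
  ∀ Y : ModuleCat.{u} A, InAddOf X Y → ∀ f : M →ₗ[A] Y, Function.Injective f →
    ∃ r : Y →ₗ[A] M, r ∘ₗ f = LinearMap.id

/-- `0 → M₁ → M₂ → M₃ → 0` is a short exact sequence. -/
def ShortExact {A : Type u} [Ring A] {M₁ M₂ M₃ : ModuleCat.{u} A}
    (f : M₁ →ₗ[A] M₂) (g : M₂ →ₗ[A] M₃) : Prop :=
  Function.Injective f ∧ Function.Exact f g ∧ Function.Surjective g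

/-- `f : XM → M` is a right `𝒳`-approximation of `M`. -/
def IsRightApprox {A : Type u} [Ring A] (X : ModuleCat.{u} A → Prop)
    {XM M : ModuleCat.{u} A} (f : XM →ₗ[A] M) : Prop :=
  X XM ∧ ∀ Y : ModuleCat.{u} A, X Y → ∀ g : Y →ₗ[A] M, ∃ h : Y →ₗ[A] XM, f ∘ₗ h = g

/-- `f : XM → M` is a minimal right `𝒳`-approximation. -/
def IsMinimalRightApprox {A : Type u} [Ring A] (X : ModuleCat.{u} A → Prop)
    {XM M : ModuleCat.{u} A} (f : XM →ₗ[A] M) : Prop :=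
  IsRightApprox X f ∧ ∀ g : XM →ₗ[A] XM, f ∘ₗ g = f → Function.Bijective g

/-- `𝒳` is contravariantly finite in `mod A`. -/
def ContravariantlyFinite {A : Type u} [Ring A] (X : ModuleCat.{u} A → Prop) : Prop :=
  ∀ M : ModuleCat.{u} A, Module.Finite A M →
    ∃ (XM : ModuleCat.{u} A) (f : XM →ₗ[A] M), IsRightApprox X f

/-- `M` is an indecomposable module: nonzero, and its only idempotent endomorphisms
are `0` and the identity. -/
def Indec {A : Type u} [Ring A] (M : ModuleCat.{u} A) : Prop :=
  (¬ Subsingleton M) ∧ ∀ e : M →ₗ[A] M, e ∘ₗ e = e → e = 0 ∨ e = LinearMap.id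

/-- `L` admits a finite coresolution `0 → L → C^0 → ⋯ → C^n → 0` with all `C^i ∈ add T`. -/
def HasAddCoresolution {A : Type u} [Ring A] (T L : ModuleCat.{u} A) : Prop :=
  ∃ (C : ℕ → ModuleCat.{u} A) (d : ∀ i, C i →ₗ[A] C (i+1)) (f : L →ₗ[A] C 0),
    Function.Injective f ∧ Function.Exact f (d 0) ∧
    (∀ i, Function.Exact (d i) (d (i+1))) ∧
    (∀ i, InAddOf (fun X => X = T) (C i)) ∧
    (∃ m, ∀ i, m ≤ i → Subsingleton (C i))

/-- `T` is a tilting `A`-module. -/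
def IsTilting {A : Type u} [Ring A] (T : ModuleCat.{u} A) : Prop :=
  Module.Finite A T ∧ (∃ n, pdLE T n) ∧ ExtVanish T T ∧
    HasAddCoresolution T (ModuleCat.of A A)

/-- `𝒳` is a resolving subcategory of `mod A`. -/
def Resolving {A : Type u} [Ring A] (X : ModuleCat.{u} A → Prop) : Prop :=
  (∀ M : ModuleCat.{u} A, Module.Finite A M → Module.Projective A M → X M) ∧
  (∀ (M₁ M₂ M₃ : ModuleCat.{u} A) (f : M₁ →ₗ[A] M₂) (g : M₂ →ₗ[A] M₃),
      ShortExact f g → X M₁ → X M₃ → X M₂) ∧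
  (∀ (M₁ M₂ M₃ : ModuleCat.{u} A) (f : M₁ →ₗ[A] M₂) (g : M₂ →ₗ[A] M₃),
      ShortExact f g → X M₂ → X M₃ → X M₁)

/-- `F` is a complete irredundant family of representatives of the isomorphism classes of
indecomposable Ext-injective modules in `𝒫`. -/
def IsCompleteExtInjFamily {A : Type u} [Ring A] {ι : Type u}
    (F : ι → ModuleCat.{u} A) : Prop :=
  (∀ i, Indec (F i) ∧ ExtInjInP (F i)) ∧
  (∀ M : ModuleCat.{u} A, Indec M → ExtInjInP M → ∃ i, Nonempty (M ≃ₗ[A] F i)) ∧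
  (∀ i j, Nonempty (F i ≃ₗ[A] F j) → i = j)

/-- `I` is a complete set of pairwise non-isomorphic indecomposable injective modules. -/
def IsCompleteIndecInjFamily {A : Type u} [Ring A] {n : ℕ}
    (I : Fin n → ModuleCat.{u} A) : Prop :=
  (∀ j, Module.Finite A (I j) ∧ Module.Injective A (I j) ∧ Indec (I j)) ∧
  (∀ M : ModuleCat.{u} A, Module.Finite A M → Module.Injective A M → Indec M →
      ∃ j, Nonempty (M ≃ₗ[A] I j)) ∧
  (∀ j k, Nonempty (I j ≃ₗ[A] I k) → j = k)

/-!
`𝒫 ∩ 𝒫^⊥` is contained in the class of Ext-injectives by definition. For the converse, present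
`N ∈ 𝒫` as a quotient of a finitely generated free module `F`. Over a Noetherian ring the kernel `K`
is again in `𝒫`, and since `F` is projective, `Ext^{i+1}(N, M)` is a quotient of `Ext^i(K, M)` for
every `i`. So vanishing of `Ext^1(-, M)` on `𝒫` propagates to all positive degrees.

The groups `ext` are values of a derived functor, whereas Mathlib's long exact sequences concern
`Abelian.Ext`. On a projective resolution, vanishing in a positive degree means for both that all
cocycles are coboundaries, so it can be transferred from one to the other.
-/

section Comparison

variable {C : Type*} [Category* C] [Abelian C]

lemma subsingleton_derivedExt_succ_iff_forall_cocycle [EnoughProjectives C] (R : Type*) [Ring R]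
    [Linear R C] {X : C} (P : ProjectiveResolution X) (Y : C) (n : ℕ) :
    Subsingleton (((Ext R C (n + 1)).obj (.op X)).obj Y) ↔
      ∀ f : P.complex.X (n + 1) ⟶ Y, P.complex.d (n + 2) (n + 1) ≫ f = 0 →
        ∃ g : P.complex.X n ⟶ Y, P.complex.d (n + 1) n ≫ g = f := by
  rw [← ModuleCat.isZero_iff_subsingleton, (P.isoExt (n + 1) Y).isZero_iff,
    ← HomologicalComplex.exactAt_iff_isZero_homology,
    HomologicalComplex.exactAt_iff' _ n (n + 1) (n + 2) (by simp) (by simp),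
    ShortComplex.moduleCat_exact_iff]
  exact Iff.rfl

lemma subsingleton_abelianExt_succ_iff_forall_cocycle [HasExt C] {X : C}
    (P : ProjectiveResolution X) (Y : C) (n : ℕ) :
    Subsingleton (Abelian.Ext X Y (n + 1)) ↔
      ∀ f : P.complex.X (n + 1) ⟶ Y, P.complex.d (n + 2) (n + 1) ≫ f = 0 →
        ∃ g : P.complex.X n ⟶ Y, P.complex.d (n + 1) n ≫ g = f := by
  refine ⟨fun _ f hf ↦ (P.extMk_eq_zero_iff f (n + 2) rfl hf n rfl).1 (Subsingleton.elim _ _),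
    fun h ↦ subsingleton_of_forall_eq 0 fun α ↦ ?_⟩
  obtain ⟨f, hf, rfl⟩ := P.extMk_surjective α (n + 2) rfl
  exact (P.extMk_eq_zero_iff f (n + 2) rfl hf n rfl).2 (h f hf)

lemma subsingleton_derivedExt_iff_abelianExt [EnoughProjectives C] [HasExt C] (R : Type*)
    [Ring R] [Linear R C] (X Y : C) {i : ℕ} (hi : 0 < i) :
    Subsingleton (((Ext R C i).obj (.op X)).obj Y) ↔ Subsingleton (Abelian.Ext X Y i) := by
  obtain ⟨n, rfl⟩ := Nat.exists_eq_add_one.2 hi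
  exact (subsingleton_derivedExt_succ_iff_forall_cocycle R (projectiveResolution X) Y n).trans
    (subsingleton_abelianExt_succ_iff_forall_cocycle (projectiveResolution X) Y n).symm

end Comparison

section Syzygies

variable {C : Type*} [Category* C] [Abelian C]

/-- The class `𝒳` is closed under syzygies: each `N` in `𝒳` fits into a short exact sequence
`0 ⟶ K ⟶ P ⟶ N ⟶ 0` with `P` projective and `K` in `𝒳`. Only one such sequence is required for
each `N`, so `𝒳` need not be closed under isomorphisms or contain the projective objects. -/
def ClosedUnderSyzygies (𝒳 : ObjectProperty C) : Prop :=
  ∀ N, 𝒳 N → ∃ (K P : C) (i : K ⟶ P) (p : P ⟶ N) (w : i ≫ p = 0),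
    (ShortComplex.mk i p w).ShortExact ∧ Projective P ∧ 𝒳 K

lemma subsingleton_abelianExt_succ_X₃_of_projective_X₂ [HasExt C] {S : ShortComplex C}
    (hS : S.ShortExact) [Projective S.X₂] (M : C) (n : ℕ) [Subsingleton (Abelian.Ext S.X₁ M n)] :
    Subsingleton (Abelian.Ext S.X₃ M (n + 1)) := by
  refine subsingleton_of_forall_eq 0 fun α ↦ ?_
  obtain ⟨β, rfl⟩ := Abelian.Ext.contravariant_sequence_exact₃ hS M α
    (Abelian.Ext.eq_zero_of_projective _) (add_comm 1 n)
  rw [Subsingleton.elim β 0, Abelian.Ext.comp_zero]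

theorem ClosedUnderSyzygies.subsingleton_abelianExt_of_le [HasExt C] {𝒳 : ObjectProperty C}
    (h𝒳 : ClosedUnderSyzygies 𝒳) {M : C} {k i : ℕ} (hki : k ≤ i)
    (hk : ∀ N, 𝒳 N → Subsingleton (Abelian.Ext N M k)) :
    ∀ N, 𝒳 N → Subsingleton (Abelian.Ext N M i) := by
  induction i, hki using Nat.le_induction with
  | base => exact hk
  | succ i _ ih =>
    intro N hN
    obtain ⟨K, P, _, _, _, hS, _, hK⟩ := h𝒳 N hN
    have := ih K hK
    exact subsingleton_abelianExt_succ_X₃_of_projective_X₂ hS M i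

end Syzygies

section Modules

variable {A : Type u} [Ring A]

lemma pdLE_iff_hasProjectiveDimensionLE (M : ModuleCat.{u} A) (n : ℕ) :
    pdLE M n ↔ HasProjectiveDimensionLE M n := by
  refine (forall₃_congr fun i hi N ↦ ?_).trans (hasProjectiveDimensionLT_iff M (n + 1)).symm
  rw [subsingleton_derivedExt_iff_abelianExt ℤ M N (Nat.zero_lt_of_lt hi)]
  exact subsingleton_iff_forall_eq 0

lemma closedUnderSyzygies_inP [IsNoetherianRing A] :
    ClosedUnderSyzygies (InP : ObjectProperty (ModuleCat.{u} A)) := by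
  rintro N ⟨_, d, hd⟩
  obtain ⟨k, f, hf⟩ := Module.Finite.exists_fin' A N
  have hS := LinearMap.shortExact_shortComplexKer hf
  have hF : Projective (ModuleCat.of A (Fin k → A)) := inferInstance
  have hN : HasProjectiveDimensionLE N d := (pdLE_iff_hasProjectiveDimensionLE N d).1 hd
  have hK : HasProjectiveDimensionLE (ModuleCat.of A (LinearMap.ker f)) d :=
    hS.hasProjectiveDimensionLT_X₁ (d + 1) inferInstance
      (hasProjectiveDimensionLT_of_ge N (d + 1) (d + 2) (by lia))
  exact ⟨_, _, _, _, _, hS, hF, inferInstanceAs (Module.Finite A (LinearMap.ker f)), d,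
    (pdLE_iff_hasProjectiveDimensionLE _ d).2 hK⟩

lemma ExtInjInP.inPerpOf [IsNoetherianRing A] {M : ModuleCat.{u} A} (hM : ExtInjInP M) :
    InPerpOf InP M := by
  intro N hN i hi
  have ext_one (L : ModuleCat.{u} A) (hL : InP L) : Subsingleton (Abelian.Ext L M 1) :=
    (subsingleton_derivedExt_iff_abelianExt ℤ L M one_pos).1 (hM.2 L hL)
  exact (subsingleton_derivedExt_iff_abelianExt ℤ N M hi).2
    (closedUnderSyzygies_inP.subsingleton_abelianExt_of_le hi ext_one N hN)

end Modules

theorem stmt_1_general {A : Type u} [Ring A] [IsNoetherianRing A] (M : ModuleCat.{u} A) :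
    (InP M ∧ InPerpOf InP M) ↔ ExtInjInP M :=
  ⟨fun ⟨hM, hperp⟩ ↦ ⟨hM, fun N hN ↦ hperp N hN 1 one_pos⟩, fun hM ↦ ⟨hM.1, hM.inPerpOf⟩⟩

/-- If `𝒫` is contravariantly finite, then `𝒫 ∩ 𝒫^⊥` is exactly the class of
Ext-injective modules in `𝒫`. -/
theorem stmt_1 (Λ : Type u) [Ring Λ] (R : Type u) [CommRing R] [IsArtinianRing R]
    [Algebra R Λ] [Module.Finite R Λ]
    (hcf : ContravariantlyFinite (fun M : ModuleCat.{u} Λᵐᵒᵖ => InP M)) :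
    ∀ M : ModuleCat.{u} Λᵐᵒᵖ, (InP M ∧ InPerpOf InP M) ↔ ExtInjInP M := by
  have : IsNoetherianRing Λᵐᵒᵖ := isNoetherian_of_tower R inferInstance
  exact stmt_1_general
end

section
/- Let Λ be an artin algebra and T a finitely generated tilting Λ-module such that T^⊥ = P^⊥, where P is the class of finitely generated modules of finite projective dimension. Then P is contravariantly finite in mod Λ and findim Λ = pd T. -/
open CategoryTheory

universe u

/-!
Write `𝒳` for the modules with a finite coresolution by finitely generated modules in
`T^⊥ ∩ ^⊥(T^⊥)`. The ring has such a coresolution because `T` is tilting, and `𝒳` is closed under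
extensions, so every finitely generated module `M` is the quotient of some `X` in `𝒳` by a finitely
generated syzygy `L`. If `L` is in turn a quotient of `Z` in `𝒳` with kernel `B`, embed `Z` into the
first term `D` of its coresolution and push out along `L ⟶ X`: this presents `M` as a quotient of an
object of `𝒳` with kernel `D / B`, whose groups `Extⁱ(T, -)` vanish from one degree earlier than
those of `B`. Iterating `pd T` times puts the kernel in `T^⊥ = 𝒫^⊥`, so that the quotient map is a
right `𝒫`-approximation.

Members of `𝒳` and of `𝒫` have projective dimension at most `pd T`, because every module `N` with
`T^⊥ ⊆ N^⊥` does: for any `Y`, the cosyzygy of `Y` of order `pd T` lies in `T^⊥ ⊆ N^⊥`, so that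
`Extⁱ(N, Y) = 0` for `i > pd T`.
-/

universe w

section AbelianCategory

open Limits
open scoped ZeroObject

variable {C : Type*} [Category* C] [Abelian C]

section ObjectProperties

variable (P Q : ObjectProperty C)

instance [P.IsStableUnderRetracts] [Q.IsStableUnderRetracts] : (P ⊓ Q).IsStableUnderRetracts where
  of_retract e h := ⟨P.prop_of_retract e h.1, Q.prop_of_retract e h.2⟩

variable [P.IsClosedUnderExtensions]

instance [Q.IsClosedUnderExtensions] : (P ⊓ Q).IsClosedUnderExtensions where
  prop_X₂_of_shortExact hS h₁ h₃ :=
    ⟨P.prop_X₂_of_shortExact hS h₁.1 h₃.1, Q.prop_X₂_of_shortExact hS h₁.2 h₃.2⟩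

instance [P.IsClosedUnderIsomorphisms] : P.IsClosedUnderBinaryProducts where
  limitsOfShape_le := by
    rintro X ⟨p⟩
    refine P.prop_of_iso ?_ (P.prop_biprod (p.prop_diag_obj (.mk .left))
      (p.prop_diag_obj (.mk .right)))
    exact IsLimit.conePointUniqueUpToIso (BinaryBiproduct.isLimit _ _)
      ((IsLimit.postcomposeHomEquiv (diagramIsoPair p.diag) _).2 p.isLimit)

instance [P.ContainsZero] [P.IsClosedUnderIsomorphisms] : P.IsClosedUnderFiniteProducts :=
  .mk'

end ObjectProperties

section Pushouts

variable {S : ShortComplex C}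

lemma exists_shortExact_of_isPushout (hS : S.ShortExact) {X Y : C} {u : S.X₁ ⟶ X}
    {v : S.X₂ ⟶ Y} {f : X ⟶ Y} (sq : IsPushout S.f u v f) :
    ∃ (g : Y ⟶ S.X₃) (zero : f ≫ g = 0), (ShortComplex.mk f g zero).ShortExact := by
  have := hS.mono_f
  have := hS.epi_g
  have : Mono f := (MorphismProperty.monomorphisms C).of_isPushout sq.flip ‹Mono S.f›
  have w : S.f ≫ S.g = u ≫ 0 := by simp
  have : Epi (sq.desc S.g 0 w) := epi_of_epi_fac (sq.inl_desc S.g 0 w)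
  refine ⟨sq.desc S.g 0 w, by simp, .mk' (ShortComplex.exact_of_g_is_cokernel _
    (CokernelCofork.IsColimit.ofπ' _ _ fun k hk =>
      ⟨hS.exact.desc (v ≫ k) (by rw [sq.w_assoc, hk, comp_zero]), ?_⟩)) ‹_› ‹_›⟩
  exact sq.hom_ext (by simp) (by simpa using hk.symm)

lemma shortExact_comp_of_isPushout (hS : S.ShortExact) {X Y : C} {u : S.X₂ ⟶ X} [Mono u]
    {v : S.X₃ ⟶ Y} {g : X ⟶ Y} (sq : IsPushout S.g u v g) :
    (ShortComplex.mk (S.f ≫ u) g (by simp [← sq.w])).ShortExact := by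
  have := hS.mono_f
  have := hS.epi_g
  have : Epi g := (MorphismProperty.epimorphisms C).of_isPushout sq.flip ‹Epi S.g›
  refine .mk' (ShortComplex.exact_of_g_is_cokernel _ (CokernelCofork.IsColimit.ofπ' _ _
    fun k hk => ⟨sq.desc (hS.exact.desc (u ≫ k) (by simpa using hk)) k (by simp), ?_⟩))
    (mono_comp _ _) ‹_›
  simp

end Pushouts

section ExtVanishing

variable [HasExt.{w} C] {S : ShortComplex C}

lemma subsingleton_ext_X₁_right (hS : S.ShortExact) {X : C} {n : ℕ}
    (h₃ : Subsingleton (Abelian.Ext X S.X₃ n)) (h₂ : Subsingleton (Abelian.Ext X S.X₂ (n + 1))) :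
    Subsingleton (Abelian.Ext X S.X₁ (n + 1)) := by
  refine subsingleton_of_forall_eq 0 fun x => ?_
  obtain ⟨y, rfl⟩ := Abelian.Ext.covariant_sequence_exact₁ X hS x (Subsingleton.elim _ _) rfl
  rw [Subsingleton.elim y 0, Abelian.Ext.zero_comp]

lemma subsingleton_ext_X₂_right (hS : S.ShortExact) {X : C} {n : ℕ}
    (h₁ : Subsingleton (Abelian.Ext X S.X₁ n)) (h₃ : Subsingleton (Abelian.Ext X S.X₃ n)) :
    Subsingleton (Abelian.Ext X S.X₂ n) := by
  refine subsingleton_of_forall_eq 0 fun x => ?_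
  obtain ⟨y, rfl⟩ := Abelian.Ext.covariant_sequence_exact₂ X hS x (Subsingleton.elim _ _)
  rw [Subsingleton.elim y 0, Abelian.Ext.zero_comp]

lemma subsingleton_ext_X₃_right (hS : S.ShortExact) {X : C} {n : ℕ}
    (h₂ : Subsingleton (Abelian.Ext X S.X₂ n)) (h₁ : Subsingleton (Abelian.Ext X S.X₁ (n + 1))) :
    Subsingleton (Abelian.Ext X S.X₃ n) := by
  refine subsingleton_of_forall_eq 0 fun x => ?_
  obtain ⟨y, rfl⟩ := Abelian.Ext.covariant_sequence_exact₃ X hS x rfl (Subsingleton.elim _ _)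
  rw [Subsingleton.elim y 0, Abelian.Ext.zero_comp]

lemma subsingleton_ext_X₁_left (hS : S.ShortExact) {Y : C} {n : ℕ}
    (h₂ : Subsingleton (Abelian.Ext S.X₂ Y n)) (h₃ : Subsingleton (Abelian.Ext S.X₃ Y (n + 1))) :
    Subsingleton (Abelian.Ext S.X₁ Y n) := by
  refine subsingleton_of_forall_eq 0 fun x => ?_
  obtain ⟨y, rfl⟩ := Abelian.Ext.contravariant_sequence_exact₁ hS Y x (add_comm 1 n)
    (Subsingleton.elim _ _)
  rw [Subsingleton.elim y 0, Abelian.Ext.comp_zero]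

lemma subsingleton_ext_X₂_left (hS : S.ShortExact) {Y : C} {n : ℕ}
    (h₁ : Subsingleton (Abelian.Ext S.X₁ Y n)) (h₃ : Subsingleton (Abelian.Ext S.X₃ Y n)) :
    Subsingleton (Abelian.Ext S.X₂ Y n) := by
  refine subsingleton_of_forall_eq 0 fun x => ?_
  obtain ⟨y, rfl⟩ := Abelian.Ext.contravariant_sequence_exact₂ hS Y x (Subsingleton.elim _ _)
  rw [Subsingleton.elim y 0, Abelian.Ext.comp_zero]

lemma exists_lift_of_subsingleton_ext (hS : S.ShortExact) {X : C}
    (h : Subsingleton (Abelian.Ext X S.X₁ 1)) (g : X ⟶ S.X₃) :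
    ∃ l : X ⟶ S.X₂, l ≫ S.g = g := by
  obtain ⟨y, hy⟩ := Abelian.Ext.covariant_sequence_exact₃ X hS (Abelian.Ext.mk₀ g)
    (zero_add 1) (Subsingleton.elim _ _)
  obtain ⟨l, rfl⟩ := Abelian.Ext.homEquiv₀.symm.surjective y
  exact ⟨l, Abelian.Ext.homEquiv₀.symm.injective (by simpa using hy)⟩

lemma nonempty_splitting_of_subsingleton_ext (hS : S.ShortExact)
    (h : Subsingleton (Abelian.Ext S.X₃ S.X₁ 1)) : Nonempty S.Splitting := by
  obtain ⟨s, hs⟩ := exists_lift_of_subsingleton_ext hS h (𝟙 S.X₃)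
  exact ⟨.ofExactOfSection S hS.exact s hs hS.mono_f⟩

lemma subsingleton_ext_of_retract_left {X X' Y : C} (e : Retract X X') {n : ℕ}
    (h : Subsingleton (Abelian.Ext X' Y n)) : Subsingleton (Abelian.Ext X Y n) := by
  refine subsingleton_of_forall_eq 0 fun x => ?_
  calc
    x = (Abelian.Ext.mk₀ e.i).comp ((Abelian.Ext.mk₀ e.r).comp x (zero_add n)) (zero_add n) := by
      simp
    _ = 0 := by rw [Subsingleton.elim ((Abelian.Ext.mk₀ e.r).comp x _) 0, Abelian.Ext.comp_zero]

lemma subsingleton_ext_of_retract_right {X Y Y' : C} (e : Retract Y Y') {n : ℕ}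
    (h : Subsingleton (Abelian.Ext X Y' n)) : Subsingleton (Abelian.Ext X Y n) := by
  refine subsingleton_of_forall_eq 0 fun x => ?_
  calc
    x = (x.comp (Abelian.Ext.mk₀ e.i) (add_zero n)).comp (Abelian.Ext.mk₀ e.r) (add_zero n) := by
      simp
    _ = 0 := by rw [Subsingleton.elim (x.comp (Abelian.Ext.mk₀ e.i) _) 0, Abelian.Ext.zero_comp]

lemma subsingleton_ext_of_isZero_left {X : C} (hX : IsZero X) (Y : C) (n : ℕ) :
    Subsingleton (Abelian.Ext X Y n) :=
  have := hX.hasProjectiveDimensionLT_zero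
  HasProjectiveDimensionLT.subsingleton X 0 n n.zero_le Y

lemma subsingleton_ext_of_isZero_right {Y : C} (hY : IsZero Y) (X : C) (n : ℕ) :
    Subsingleton (Abelian.Ext X Y n) :=
  have := hY.hasInjectiveDimensionLT_zero
  HasInjectiveDimensionLT.subsingleton Y 0 n n.zero_le X

/-- The objects `Y` with `Extⁱ(X, Y) = 0` for all `i > n`. For `n = 0` this is `X^⊥`. -/
def extVanishingAbove (X : C) (n : ℕ) : ObjectProperty C :=
  fun Y => ∀ i, n < i → Subsingleton (Abelian.Ext X Y i)

/-- The kernel `T^⊥ ∩ ^⊥(T^⊥)` of the hereditary cotorsion pair generated by `T`. -/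
def extKernel (T : C) : ObjectProperty C :=
  fun X => extVanishingAbove T 0 X ∧ ∀ Y, extVanishingAbove T 0 Y → extVanishingAbove X 0 Y

instance (T : C) : (extKernel T).ContainsZero where
  exists_zero := ⟨0, isZero_zero C,
    fun i _ => subsingleton_ext_of_isZero_right (isZero_zero C) T i,
    fun Y _ i _ => subsingleton_ext_of_isZero_left (isZero_zero C) Y i⟩

instance (T : C) : (extKernel T).IsClosedUnderExtensions where
  prop_X₂_of_shortExact hS h₁ h₃ :=
    ⟨fun i hi => subsingleton_ext_X₂_right hS (h₁.1 i hi) (h₃.1 i hi),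
      fun Y hY i hi => subsingleton_ext_X₂_left hS (h₁.2 Y hY i hi) (h₃.2 Y hY i hi)⟩

instance (T : C) : (extKernel T).IsStableUnderRetracts where
  of_retract e h := ⟨fun i hi => subsingleton_ext_of_retract_right e (h.1 i hi),
    fun Y hY i hi => subsingleton_ext_of_retract_left e (h.2 Y hY i hi)⟩

lemma hasProjectiveDimensionLT_succ_of_extVanishingAbove [EnoughInjectives C] {T X : C} {n : ℕ}
    [HasProjectiveDimensionLT T (n + 1)]
    (h : ∀ Y, extVanishingAbove T 0 Y → extVanishingAbove X 0 Y) :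
    HasProjectiveDimensionLT X (n + 1) := by
  have dimension_shift (m : ℕ) : ∀ Y, extVanishingAbove T m Y → extVanishingAbove X m Y := by
    induction m with
    | zero => exact h
    | succ m ih =>
      intro Y hY i hi
      obtain ⟨i, rfl⟩ := Nat.exists_eq_succ_of_ne_zero (Nat.ne_zero_of_lt hi)
      have hS : (ShortComplex.mk (Injective.ι Y) (cokernel.π (Injective.ι Y))
          (cokernel.condition _)).ShortExact := .mk' (ShortComplex.exact_cokernel _) inferInstance
            inferInstance
      have hTS : extVanishingAbove T m (cokernel (Injective.ι Y)) := fun j hj => by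
        obtain ⟨j, rfl⟩ := Nat.exists_eq_succ_of_ne_zero (Nat.ne_zero_of_lt hj)
        exact subsingleton_ext_X₃_right hS (Abelian.Ext.subsingleton_of_injective _ _ _)
          (hY (j + 2) (by lia))
      exact subsingleton_ext_X₁_right hS (ih _ hTS i (by lia))
        (Abelian.Ext.subsingleton_of_injective _ _ _)
  refine .mk fun i hi Y e => ?_
  have := dimension_shift n Y
    (fun j hj => HasProjectiveDimensionLT.subsingleton T (n + 1) j hj Y) i hi
  exact Subsingleton.elim _ _

end ExtVanishing

section FiniteCoresolutions

/-- An object `X` has a finite `ω`-coresolution `0 ⟶ X ⟶ C⁰ ⟶ ⋯ ⟶ Cⁿ ⟶ 0`. It is encoded one short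
exact sequence at a time, so that induction on the length is induction on the predicate. -/
inductive HasFiniteCoresolution (ω : ObjectProperty C) : C → Prop
  | of_isZero {X : C} (hX : IsZero X) : HasFiniteCoresolution ω X
  | of_shortExact {S : ShortComplex C} (hS : S.ShortExact) (h₂ : ω S.X₂)
      (h₃ : HasFiniteCoresolution ω S.X₃) : HasFiniteCoresolution ω S.X₁

/-- An object `M` is `𝒳`-resolved with `𝒴`-kernel if there is a short exact sequence
`0 ⟶ Y ⟶ X ⟶ M ⟶ 0` with `Y` in `𝒴` and `X` in `𝒳`. If `Ext¹(𝒳, 𝒴) = 0`, then `X ⟶ M` is a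
special `𝒳`-precover. -/
def HasPresentation (𝒴 𝒳 : ObjectProperty C) (M : C) : Prop :=
  ∃ (Y X : C) (f : Y ⟶ X) (g : X ⟶ M) (zero : f ≫ g = 0),
    (ShortComplex.mk f g zero).ShortExact ∧ 𝒴 Y ∧ 𝒳 X

namespace HasFiniteCoresolution

variable {ω : ObjectProperty C}

lemma of_iso {X Y : C} (e : X ≅ Y) (hX : HasFiniteCoresolution ω X) :
    HasFiniteCoresolution ω Y := by
  cases hX with
  | of_isZero hX => exact .of_isZero (hX.of_iso e.symm)
  | @of_shortExact S hS h₂ h₃ =>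
    refine .of_shortExact (S := .mk (e.inv ≫ S.f) S.g (by simp)) ?_ h₂ h₃
    exact ShortComplex.shortExact_of_iso (ShortComplex.isoMk e (Iso.refl _) (Iso.refl _)) hS

instance : ObjectProperty.IsClosedUnderIsomorphisms (HasFiniteCoresolution ω) where
  of_iso e h := h.of_iso e

instance : ObjectProperty.ContainsZero (HasFiniteCoresolution ω) where
  exists_zero := ⟨0, isZero_zero C, .of_isZero (isZero_zero C)⟩

lemma exists_shortExact [ω.ContainsZero] [ω.IsClosedUnderIsomorphisms] {X : C}
    (hX : HasFiniteCoresolution ω X) :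
    ∃ (Y Z : C) (f : X ⟶ Y) (g : Y ⟶ Z) (zero : f ≫ g = 0),
      (ShortComplex.mk f g zero).ShortExact ∧ ω Y ∧ HasFiniteCoresolution ω Z := by
  cases hX with
  | of_isZero hX =>
    exact ⟨X, X, 𝟙 X, 0, comp_zero,
      (ShortComplex.Splitting.ofIsIsoOfIsZero _ inferInstance hX).shortExact,
      ω.prop_of_isZero hX, .of_isZero hX⟩
  | @of_shortExact S hS h₂ h₃ => exact ⟨_, _, S.f, S.g, S.zero, hS, h₂, h₃⟩

variable [HasExt.{w} C]

lemma extVanishingAbove_of_forall {X Y : C} {n : ℕ} (hX : HasFiniteCoresolution ω X)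
    (hY : ∀ W, ω W → extVanishingAbove W n Y) : extVanishingAbove X n Y := by
  induction hX with
  | of_isZero hX => exact fun i _ => subsingleton_ext_of_isZero_left hX Y i
  | of_shortExact hS h₂ _ ih =>
    exact fun i hi => subsingleton_ext_X₁_left hS (hY _ h₂ i hi) (ih (i + 1) (by lia))

-- Pushing `S` out along the first coresolution map of `S.X₁` gives an extension of `S.X₃` by an
-- object of `ω`, which splits; this yields the map from `S.X₂` into an extension of objects of `ω`.
lemma of_extension [ω.ContainsZero] [ω.IsClosedUnderExtensions] [ω.IsClosedUnderIsomorphisms]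
    (hω : ∀ X Y, ω X → ω Y → extVanishingAbove X 0 Y)
    {S : ShortComplex C} (hS : S.ShortExact) (h₁ : HasFiniteCoresolution ω S.X₁)
    (h₃ : HasFiniteCoresolution ω S.X₃) : HasFiniteCoresolution ω S.X₂ := by
  obtain @⟨X, Q, W, f, g, zero⟩ := S
  dsimp only at h₁ h₃ ⊢
  induction h₁ generalizing Q W with
  | of_isZero hX =>
    have : IsIso g := hS.isIso_g_iff.2 hX
    exact h₃.of_iso (asIso g).symm
  | @of_shortExact S' hS' hC _ ih =>
    obtain ⟨D, W', d, q, _, hWD, hD, hW'⟩ := h₃.exists_shortExact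
    obtain ⟨_, _, hCGW⟩ := exists_shortExact_of_isPushout hS (.of_hasPushout f S'.f)
    obtain ⟨p, _, hQGX⟩ :=
      exists_shortExact_of_isPushout hS' (IsPushout.of_hasPushout f S'.f).flip
    obtain ⟨σ⟩ := nonempty_splitting_of_subsingleton_ext hCGW
      (h₃.extVanishingAbove_of_forall (fun V hV => hω V _ hV hC) 1 one_pos)
    let τ : (ShortComplex.mk σ.s σ.r σ.s_r).Splitting :=
      { r := _, s := _, f_r := σ.s_g, s_g := σ.f_r, id := (add_comm _ _).trans σ.id }
    obtain ⟨_, _, hDEC⟩ := exists_shortExact_of_isPushout τ.shortExact (.of_hasPushout σ.s d)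
    obtain ⟨_, _, hGEW⟩ :=
      exists_shortExact_of_isPushout hWD (IsPushout.of_hasPushout σ.s d).flip
    have := hGEW.mono_f
    have hQEV := shortExact_comp_of_isPushout hQGX
      (.of_hasPushout p (pushout.inl σ.s d))
    obtain ⟨_, _, hXVW⟩ := exists_shortExact_of_isPushout hGEW
      (IsPushout.of_hasPushout p (pushout.inl σ.s d)).flip
    have hE := ω.prop_X₂_of_shortExact hDEC hD hC
    exact .of_shortExact hQEV hE (ih _ _ _ hXVW hW')

end HasFiniteCoresolution

end FiniteCoresolutions

section Approximations

variable [HasExt.{w} C] {ω : ObjectProperty C} [ω.ContainsZero] [ω.IsClosedUnderExtensions]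
  [ω.IsClosedUnderIsomorphisms] {T : C}

lemma HasFiniteCoresolution.isClosedUnderExtensions (hω : ω ≤ extKernel T) :
    ObjectProperty.IsClosedUnderExtensions (HasFiniteCoresolution ω) where
  prop_X₂_of_shortExact := of_extension fun X Y hX hY => (hω X hX).2 Y (hω Y hY).1

lemma HasPresentation.of_syzygy (hω : ω ≤ extKernel T) {S : ShortComplex C} (hS : S.ShortExact)
    (h₂ : HasFiniteCoresolution ω S.X₂) {n : ℕ}
    (h₁ : HasPresentation (extVanishingAbove T (n + 1)) (HasFiniteCoresolution ω) S.X₁) :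
    HasPresentation (extVanishingAbove T n) (HasFiniteCoresolution ω) S.X₃ := by
  obtain ⟨B, Z, b, q, _, hBZL, hB, hZ⟩ := h₁
  obtain ⟨D, Z', c, d, _, hZDZ, hD, hZ'⟩ := hZ.exists_shortExact
  have := hZDZ.mono_f
  have hBDK := shortExact_comp_of_isPushout hBZL (.of_hasPushout q c)
  have hK : extVanishingAbove T n (pushout q c) := fun i hi =>
    subsingleton_ext_X₃_right hBDK ((hω D hD).1 i (by lia)) (hB (i + 1) (by lia))
  obtain ⟨_, _, hLKZ⟩ :=
    exists_shortExact_of_isPushout hZDZ (IsPushout.of_hasPushout q c).flip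
  obtain ⟨_, _, hPQZ⟩ :=
    exists_shortExact_of_isPushout hLKZ (.of_hasPushout (pushout.inl q c) S.f)
  obtain ⟨_, _, hKQM⟩ :=
    exists_shortExact_of_isPushout hS (IsPushout.of_hasPushout (pushout.inl q c) S.f).flip
  have := HasFiniteCoresolution.isClosedUnderExtensions hω
  exact ⟨_, _, _, _, _, hKQM, hK, ObjectProperty.prop_X₂_of_shortExact _ hPQZ h₂ hZ'⟩

lemma hasPresentation_extVanishingAbove_zero (hω : ω ≤ extKernel T) {𝒜 : ObjectProperty C}
    (h𝒜 : ∀ M, 𝒜 M → HasPresentation 𝒜 (HasFiniteCoresolution ω) M) (n : ℕ)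
    [HasProjectiveDimensionLT T (n + 1)] {M : C} (hM : 𝒜 M) :
    HasPresentation (extVanishingAbove T 0) (HasFiniteCoresolution ω) M := by
  suffices h : ∀ m ≤ n, ∀ M, 𝒜 M →
      HasPresentation (extVanishingAbove T m) (HasFiniteCoresolution ω) M from
    h 0 n.zero_le M hM
  intro m hm
  induction hm using Nat.decreasingInduction with
  | self =>
    intro M hM
    obtain ⟨Y, X, f, g, zero, hS, -, hX⟩ := h𝒜 M hM
    exact ⟨Y, X, f, g, zero, hS,
      fun i hi => HasProjectiveDimensionLT.subsingleton T (n + 1) i hi Y, hX⟩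
  | of_succ k _ ih =>
    intro M hM
    obtain ⟨Y, X, f, g, zero, hS, hY, hX⟩ := h𝒜 M hM
    exact (ih Y hY).of_syzygy hω hS hX

end Approximations

end AbelianCategory

section Modules

variable {A : Type u} [Ring A]

section ExtComparison

lemma subsingleton_ext_succ_iff (M N : ModuleCat.{u} A) (n : ℕ) :
    Subsingleton (ext M N (n + 1)) ↔ Subsingleton (Abelian.Ext.{u} M N (n + 1)) := by
  let P := projectiveResolution M
  have exact_iff : Subsingleton (ext M N (n + 1)) ↔
      ∀ f : P.complex.X (n + 1) ⟶ N, P.complex.d (n + 2) (n + 1) ≫ f = 0 →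
        ∃ g : P.complex.X n ⟶ N, P.complex.d (n + 1) n ≫ g = f := by
    rw [← ModuleCat.isZero_iff_subsingleton, (P.isoExt (n + 1) N).isZero_iff,
      ← HomologicalComplex.exactAt_iff_isZero_homology,
      HomologicalComplex.exactAt_iff' _ n (n + 1) (n + 2) (by simp) (by simp),
      ShortComplex.moduleCat_exact_iff]
    rfl
  rw [exact_iff]
  refine ⟨fun h => subsingleton_of_forall_eq 0 fun α => ?_, fun _ f hf => ?_⟩
  · obtain ⟨f, hf, rfl⟩ := P.extMk_surjective α (n + 2) rfl
    exact (P.extMk_eq_zero_iff f (n + 2) rfl hf n rfl).2 (h f hf)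
  · exact (P.extMk_eq_zero_iff f (n + 2) rfl hf n rfl).1 (Subsingleton.elim _ _)

lemma extVanishingAbove_iff (M N : ModuleCat.{u} A) (n : ℕ) :
    extVanishingAbove.{u} M n N ↔ ∀ i, n < i → Subsingleton (ext M N i) := by
  refine forall₂_congr fun i hi => ?_
  obtain ⟨i, rfl⟩ := Nat.exists_eq_succ_of_ne_zero (Nat.ne_zero_of_lt hi)
  exact (subsingleton_ext_succ_iff M N i).symm

lemma extVanish_iff (M N : ModuleCat.{u} A) : ExtVanish M N ↔ extVanishingAbove.{u} M 0 N :=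
  (extVanishingAbove_iff M N 0).symm

lemma pdLE_iff_hasProjectiveDimensionLT (M : ModuleCat.{u} A) (n : ℕ) :
    pdLE M n ↔ HasProjectiveDimensionLT M (n + 1) := by
  refine ⟨fun h => .mk fun i hi Y e => ?_, fun _ i hi N => ?_⟩
  · have := (extVanishingAbove_iff M Y n).2 (fun j hj => h j hj Y) i hi
    exact Subsingleton.elim _ _
  · exact (extVanishingAbove_iff M N n).1
      (fun j hj => HasProjectiveDimensionLT.subsingleton M (n + 1) j hj N) i hi

lemma pdLE.of_extVanish {T M : ModuleCat.{u} A} {n : ℕ} (hT : pdLE T n)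
    (h : ∀ N, ExtVanish T N → ExtVanish M N) : pdLE M n := by
  rw [pdLE_iff_hasProjectiveDimensionLT] at hT ⊢
  exact hasProjectiveDimensionLT_succ_of_extVanishingAbove.{u} (T := T) fun Y hY =>
    (extVanish_iff M Y).1 (h Y ((extVanish_iff T Y).2 hY))

lemma projDim_le_of_extVanish {T M : ModuleCat.{u} A}
    (h : ∀ N, ExtVanish T N → ExtVanish M N) : projDim M ≤ projDim T := by
  refine le_sInf ?_
  rintro _ ⟨n, rfl, hn⟩
  exact sInf_le ⟨n, rfl, hn.of_extVanish h⟩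

end ExtComparison

section AdditiveClosure

instance : (ModuleCat.isFG.{u} A).ContainsZero where
  exists_zero := ⟨ModuleCat.of A PUnit.{u + 1}, ModuleCat.isZero_of_subsingleton _,
    inferInstanceAs (Module.Finite A PUnit.{u + 1})⟩

instance : (ModuleCat.isFG.{u} A).IsClosedUnderExtensions where
  prop_X₂_of_shortExact {S} hS h₁ h₃ := by
    rw [ModuleCat.isFG_iff] at h₁ h₃ ⊢
    exact Module.Finite.of_exact
      ((ShortComplex.ShortExact.moduleCat_exact_iff_function_exact S).1 hS.exact)
      hS.moduleCat_surjective_g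

instance : (ModuleCat.isFG.{u} A).IsStableUnderRetracts where
  of_retract {M N} e (h : Module.Finite A N) :=
    Module.Finite.of_surjective e.r.hom fun x => ⟨e.i x, by simp [← ConcreteCategory.comp_apply]⟩

lemma InAddOf.prop {X : ModuleCat.{u} A → Prop} {M : ModuleCat.{u} A} (hM : InAddOf X M)
    (Q : ObjectProperty (ModuleCat.{u} A)) [Q.ContainsZero] [Q.IsClosedUnderExtensions]
    [Q.IsStableUnderRetracts] (hXQ : ∀ N, X N → Q N) : Q M := by
  obtain ⟨k, F, hF, s, r, hrs⟩ := hM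
  let e := DirectSum.linearEquivFunOnFintype A (Fin k) (fun i => F i)
  have ρ : Retract M (ModuleCat.of A (DirectSum (Fin k) fun i => F i)) :=
    ⟨ModuleCat.ofHom s, ModuleCat.ofHom r, ModuleCat.hom_ext hrs⟩
  exact Q.prop_of_retract (ρ.trans (e.toModuleIso ≪≫ (ModuleCat.piIsoPi F).symm).retract)
    (Q.prop_product fun i => hXQ _ (hF i))

end AdditiveClosure

lemma shortExact_ker_subtype {M N : Type u} [AddCommGroup M] [Module A M] [AddCommGroup N]
    [Module A N] (g : M →ₗ[A] N)
    (hg : Function.Surjective g) :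
    (ModuleCat.shortComplexOfCompEqZero (LinearMap.ker g).subtype g
      (LinearMap.comp_ker_subtype g)).ShortExact :=
  ModuleCat.shortComplex_shortExact _ (LinearMap.exact_subtype_ker_map g)
    (LinearMap.ker g).subtype_injective hg

lemma HasAddCoresolution.hasFiniteCoresolution {T L : ModuleCat.{u} A}
    (hL : HasAddCoresolution T L) {ω : ObjectProperty (ModuleCat.{u} A)}
    (hω : ∀ N, InAddOf (fun X => X = T) N → ω N) : HasFiniteCoresolution ω L := by
  obtain ⟨C, d, f, hf, hfd, hdd, hC, m, hm⟩ := hL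
  let dK (j : ℕ) : C j →ₗ[A] LinearMap.ker (d (j + 1)) :=
    (d j).codRestrict _ fun x => (hdd j _).2 ⟨x, rfl⟩
  have dK_surjective (j : ℕ) : Function.Surjective (dK j) := by
    rintro ⟨x, hx⟩
    obtain ⟨y, rfl⟩ := (hdd j x).1 hx
    exact ⟨y, rfl⟩
  have coresolution_of_exact {j : ℕ} {K : ModuleCat.{u} A} {i : K →ₗ[A] C j}
      (hi : Function.Injective i) (hid : Function.Exact i (d j))
      (h : HasFiniteCoresolution ω (ModuleCat.of A (LinearMap.ker (d (j + 1))))) :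
      HasFiniteCoresolution ω K := by
    have hidK : Function.Exact i (dK j) := fun x => Subtype.ext_iff.trans (hid x)
    exact .of_shortExact (ModuleCat.shortComplex_shortExact
      (ModuleCat.shortComplexOfCompEqZero i (dK j) hidK.linearMap_comp_eq_zero) hidK hi
      (dK_surjective j)) (hω _ (hC j)) h
  have coresolution_ker (k : ℕ) : ∀ j, m ≤ j + k →
      HasFiniteCoresolution ω (ModuleCat.of A (LinearMap.ker (d j))) := by
    induction k with
    | zero =>
      intro j hj
      have := hm j hj
      exact .of_isZero (ModuleCat.isZero_of_subsingleton _)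
    | succ k ih =>
      exact fun j hj => coresolution_of_exact (LinearMap.ker (d j)).subtype_injective
        (LinearMap.exact_subtype_ker_map _) (ih (j + 1) (by lia))
  exact coresolution_of_exact hf hfd (coresolution_ker m 1 (by lia))

section Tilting

variable {T : ModuleCat.{u} A}

lemma IsTilting.inf_extKernel_of_inAddOf (hT : IsTilting T) {N : ModuleCat.{u} A}
    (hN : InAddOf (fun X => X = T) N) : (ModuleCat.isFG A ⊓ extKernel.{u} T) N := by
  refine hN.prop _ ?_
  rintro _ rfl
  exact ⟨hT.1, (extVanish_iff _ _).1 hT.2.2.1, fun _ hY => hY⟩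

variable [IsNoetherianRing A]

lemma InP.of_hasFiniteCoresolution (hT : ∃ n, pdLE T n) {X : ModuleCat.{u} A}
    (hX : HasFiniteCoresolution (ModuleCat.isFG A ⊓ extKernel.{u} T) X) : InP X := by
  obtain ⟨n, hn⟩ := hT
  refine ⟨?_, n, hn.of_extVanish fun N hN => ?_⟩
  · obtain ⟨Y, Z, f, g, _, hS, hY, -⟩ := hX.exists_shortExact
    have : Module.Finite A Y := hY.1
    exact Module.Finite.of_injective f.hom hS.moduleCat_injective_f
  · rw [extVanish_iff] at hN ⊢
    exact hX.extVanishingAbove_of_forall fun W hW => hW.2.2 N hN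

lemma IsTilting.hasPresentation_isFG (hT : IsTilting T) {M : ModuleCat.{u} A}
    (hM : ModuleCat.isFG A M) : HasPresentation (ModuleCat.isFG A)
      (HasFiniteCoresolution (ModuleCat.isFG A ⊓ extKernel.{u} T)) M := by
  have hA := hT.2.2.2.hasFiniteCoresolution fun N hN => hT.inf_extKernel_of_inAddOf hN
  have := HasFiniteCoresolution.isClosedUnderExtensions
    (inf_le_right : ModuleCat.isFG A ⊓ extKernel.{u} T ≤ _)
  have : Module.Finite A M := hM
  obtain ⟨m, p, hp⟩ := Module.Finite.exists_fin' A M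
  have hfree : HasFiniteCoresolution (ModuleCat.isFG A ⊓ extKernel.{u} T)
      (ModuleCat.of A (Fin m → A)) :=
    (ObjectProperty.prop_product _ fun _ => hA).of_iso
      (ModuleCat.piIsoPi fun _ : Fin m => ModuleCat.of A A)
  have hker : Module.Finite A (LinearMap.ker p) := inferInstance
  exact ⟨_, _, _, _, _, shortExact_ker_subtype p hp, hker, hfree⟩

lemma IsTilting.hasPresentation (hT : IsTilting T) {M : ModuleCat.{u} A}
    (hM : ModuleCat.isFG A M) : HasPresentation (extVanishingAbove.{u} T 0) InP M := by
  obtain ⟨n, hn⟩ := hT.2.1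
  have := (pdLE_iff_hasProjectiveDimensionLT T n).1 hn
  obtain ⟨Y, X, f, g, zero, hS, hY, hX⟩ := hasPresentation_extVanishingAbove_zero
    (inf_le_right : ModuleCat.isFG A ⊓ extKernel.{u} T ≤ _) (fun _ => hT.hasPresentation_isFG) n hM
  exact ⟨Y, X, f, g, zero, hS, hY, .of_hasFiniteCoresolution ⟨n, hn⟩ hX⟩

end Tilting

end Modules

theorem stmt_12_general (A : Type u) [Ring A] [IsNoetherianRing A] (T : ModuleCat.{u} A)
    (htilt : IsTilting T) (hperp : ∀ M : ModuleCat.{u} A, ExtVanish T M → InPerpOf InP M) :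
    ContravariantlyFinite (fun M : ModuleCat.{u} A => InP M) ∧ findim A = projDim T := by
  refine ⟨fun M hM => ?_, le_antisymm ?_ ?_⟩
  · obtain ⟨Y, X, f, g, zero, hS, hY, hX⟩ := htilt.hasPresentation hM
    refine ⟨X, g.hom, hX, fun N hN t => ?_⟩
    have hNY : ExtVanish N Y := hperp Y ((extVanish_iff T Y).2 hY) N hN
    obtain ⟨l, hl⟩ := exists_lift_of_subsingleton_ext hS
      ((extVanish_iff N Y).1 hNY 1 one_pos) (ModuleCat.ofHom t)
    exact ⟨l.hom, congrArg ModuleCat.Hom.hom hl⟩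
  · refine sSup_le ?_
    rintro _ ⟨M, hM, rfl⟩
    exact projDim_le_of_extVanish fun N hN => hperp N hN M hM
  · exact le_sSup ⟨T, ⟨htilt.1, htilt.2.1⟩, rfl⟩

/-- If `T` is a finitely generated tilting module with `T^⊥ = 𝒫^⊥`, then `𝒫` is
contravariantly finite and `findim Λ = pd T`. -/
theorem stmt_12 (Λ : Type u) [Ring Λ] (R : Type u) [CommRing R] [IsArtinianRing R]
    [Algebra R Λ] [Module.Finite R Λ]
    (T : ModuleCat.{u} Λᵐᵒᵖ) (htilt : IsTilting T)
    (hperp : ∀ M : ModuleCat.{u} Λᵐᵒᵖ, ExtVanish T M ↔ InPerpOf InP M) :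
    ContravariantlyFinite (fun M : ModuleCat.{u} Λᵐᵒᵖ => InP M) ∧
      findim Λᵐᵒᵖ = projDim T := by
  have : Module.Finite R Λᵐᵒᵖ := Module.Finite.equiv (MulOpposite.opLinearEquiv R)
  have : IsNoetherianRing Λᵐᵒᵖ := IsNoetherianRing.of_finite R _
  exact stmt_12_general _ T htilt fun M => (hperp M).1
end
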